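/- arXiv:1204.0078 — 3 statements merged into one kernel-verified Lean document; each statement's English description precedes it below -/
import Mathlib

section
/- Let (X, Σ, μ) be a subprobability space, let Q be an error-control family on X, and let P be a Q-acceptable partition of X. Then there exists a finite or countable sequence (Q_i) of elements of Q such that the family R = {Q_i ∖ (Q_1 ∪ … ∪ Q_{i−1})}_i is a Q-acceptable partition of X, every element of R belongs to the sigma algebra generated by Q, and h(μ; R) ≤ h(μ; P). -/
open MeasureTheory ENNReal Filter

/-- The Shannon function `sh x = -x * log₂ x` (with `sh 0 = 0`, since `log 0 = 0`). -/
noncomputable def sh (x : ℝ) : ℝ := -x * Real.logb 2 x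

/-- A (countable, ℕ-indexed) partition of `X` w.r.t. the measure `μ`:
measurable, pairwise disjoint sets whose union has null complement. -/
def IsPartition {X : Type*} [MeasurableSpace X] (μ : Measure X) (P : ℕ → Set X) : Prop :=
  (∀ i, MeasurableSet (P i)) ∧ Pairwise (Function.onFun Disjoint P) ∧
    μ (Set.univ \ ⋃ i, P i) = 0

/-- The entropy `h(μ; P) = Σ_i sh(μ(P_i)) ∈ [0,∞]` of a countable family of sets. -/
noncomputable def partEntropy {X : Type*} [MeasurableSpace X]
    (μ : Measure X) (P : ℕ → Set X) : ℝ≥0∞ :=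
  ∑' i, ENNReal.ofReal (sh ((μ (P i)).toReal))

/-- An error-control family: a family of measurable sets covering `X`. -/
def IsErrorControl {X : Type*} [MeasurableSpace X] (𝒬 : Set (Set X)) : Prop :=
  (∀ Q ∈ 𝒬, MeasurableSet Q) ∧ ⋃₀ 𝒬 = Set.univ

/-- `P` is `𝒬`-acceptable: every element of `P` is contained in some member of `𝒬`. -/
def Acceptable {X : Type*} (𝒬 : Set (Set X)) (P : ℕ → Set X) : Prop :=
  ∀ i, ∃ Q ∈ 𝒬, P i ⊆ Q

/-- The entropy `H(μ; 𝒬)`: the infimum of entropies of `𝒬`-acceptable partitions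
(`= ∞` if there is none). -/
noncomputable def coverEntropy {X : Type*} [MeasurableSpace X]
    (μ : Measure X) (𝒬 : Set (Set X)) : ℝ≥0∞ :=
  ⨅ (P : ℕ → Set X) (_ : IsPartition μ P) (_ : Acceptable 𝒬 P), partEntropy μ P

/-!
Choose the sets greedily: `f n ∈ 𝒬` contains the part of `P` whose remainder outside
`f 0 ∪ … ∪ f (n - 1)` has the largest mass. One step of the greedy choice cuts the masses `b j` of
the remainders down to `c j ≤ b j`, erases the largest of them, `b k`, and collects the removed
mass `r = ∑ j, (b j - c j)` into one new part. Subtracting from the concave function `sh` its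
supporting line at `b k` gives a concave `ψ` that is maximal at `b k`, hence increasing on its left:
`ψ r ≤ ψ (b k)` and `ψ (c j) ≤ ψ (b j)`. As mass is conserved, the linear terms cancel in the sum
over all parts, so no step increases the entropy. The masses of the new parts tend to zero and
bound all the remainders, so the greedy sequence covers almost every point.
-/

lemma exists_forall_le_of_summable {ι : Type*} {b : ι → ℝ} [Nonempty ι] (hb : Summable b)
    (hb0 : ∀ j, 0 ≤ b j) : ∃ k, ∀ j, b j ≤ b k := by
  by_cases! hpos : ∃ i, 0 < b i
  · obtain ⟨i, hi⟩ := hpos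
    have hfin : {j | b i ≤ b j}.Finite := by
      simpa using hb.tendsto_cofinite_zero.eventually_lt_const hi
    obtain ⟨k, hik, hk⟩ := hfin.exists_maximalFor b _ ⟨i, le_refl (b i)⟩
    exact ⟨k, fun j ↦ (le_total (b k) (b j)).elim (fun hkj ↦ hk (le_trans hik hkj) hkj) id⟩
  · exact ‹Nonempty ι›.elim fun k ↦ ⟨k, fun j ↦ (hpos j).trans (hb0 k)⟩

section Concave

variable {φ : ℝ → ℝ} {S : Set ℝ} {a : ℝ}

lemma exists_isMaxOn_sub_mul_of_concaveOn (hφ : ConcaveOn ℝ S φ) (ha : a ∈ interior S) :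
    ∃ m, IsMaxOn (fun x ↦ φ x - m * x) S a := by
  set m := derivWithin (-φ) (Set.Ioi a) a
  have hderiv : HasDerivWithinAt (fun x ↦ (-φ) x - m * x) (m - m * 1) (Set.Ioi a) a :=
    (hφ.neg.hasDerivWithinAt_rightDeriv_of_mem_interior ha).sub
      ((hasDerivWithinAt_id a _).const_mul m)
  have hconvex : ConvexOn ℝ S fun x ↦ (-φ) x - m * x :=
    hφ.neg.sub ((LinearMap.mulLeft ℝ m).concaveOn hφ.1)
  have hmin : IsMinOn (fun x ↦ (-φ) x - m * x) S a :=
    hconvex.isMinOn_of_rightDeriv_eq_zero ha <| by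
      rw [hderiv.derivWithin (uniqueDiffWithinAt_Ioi a), mul_one, sub_self]
  exact ⟨-m, by simpa only [Pi.neg_apply, neg_sub', neg_neg, neg_mul] using hmin.neg⟩

lemma monotoneOn_inter_Iic_of_isMaxOn (hφ : ConcaveOn ℝ S φ) (haS : a ∈ S)
    (ha : IsMaxOn φ S a) : MonotoneOn φ (S ∩ Set.Iic a) := fun x hx y hy hxy ↦
  calc φ x = min (φ x) (φ a) := (min_eq_left (isMaxOn_iff.1 ha x hx.1)).symm
    _ ≤ φ y := hφ.min_le_of_mem_Icc hx.1 haS ⟨hxy, hy.2⟩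

variable {ι : Type*} {b c : ι → ℝ} {k : ι} {r : ℝ}

lemma summable_and_add_tsum_le_tsum_of_concaveOn (hφ : ConcaveOn ℝ S φ) (hφ0 : φ 0 = 0)
    (hb : ∀ j, b j ∈ S) (hc : ∀ j, c j ∈ S) (hcb : ∀ j, c j ≤ b j) (hbk : ∀ j, b j ≤ b k)
    (hk : b k ∈ interior S) (hck : c k = 0) (hrS : r ∈ S) (hr : HasSum (fun j ↦ b j - c j) r)
    (hφc : ∀ j, 0 ≤ φ (c j)) (hφb : Summable fun j ↦ φ (b j)) :
    (Summable fun j ↦ φ (c j)) ∧ φ r + ∑' j, φ (c j) ≤ ∑' j, φ (b j) := by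
  obtain ⟨m, hm⟩ := exists_isMaxOn_sub_mul_of_concaveOn hφ hk
  have hψ : ConcaveOn ℝ S fun x ↦ φ x - m * x :=
    hφ.sub ((LinearMap.mulLeft ℝ m).convexOn hφ.1)
  have hle (j) : φ (c j) - m * c j ≤ φ (b j) - m * b j :=
    monotoneOn_inter_Iic_of_isMaxOn hψ (hb k) hm ⟨hc j, (hcb j).trans (hbk j)⟩ ⟨hb j, hbk j⟩ (hcb j)
  have hφc_summable : Summable fun j ↦ φ (c j) :=
    .of_nonneg_of_le hφc (fun j ↦ by linarith [hle j]) (hφb.sub (hr.summable.mul_left m))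
  have hgain : HasSum (fun j ↦ φ (b j) - φ (c j) - m * (b j - c j))
      (∑' j, φ (b j) - ∑' j, φ (c j) - m * r) :=
    (hφb.hasSum.sub hφc_summable.hasSum).sub (hr.mul_left m)
  have hgain_k : φ (b k) - m * b k ≤ ∑' j, φ (b j) - ∑' j, φ (c j) - m * r := by
    simpa only [hck, hφ0, sub_zero] using le_hasSum hgain k fun j _ ↦ by linarith [hle j]
  have hr_le : φ r - m * r ≤ φ (b k) - m * b k := isMaxOn_iff.1 hm r hrS
  exact ⟨hφc_summable, by linarith⟩

end Concave

section Shannon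

lemma sh_zero : sh 0 = 0 := by simp [sh]

lemma sh_eq_smul_negMulLog : sh = (Real.log 2)⁻¹ • Real.negMulLog := by
  ext x
  simp only [sh, Real.logb, Real.negMulLog, Pi.smul_apply, smul_eq_mul]
  ring

lemma sh_nonneg {x : ℝ} (hx : x ∈ Set.Icc 0 1) : 0 ≤ sh x := by
  rw [sh_eq_smul_negMulLog]
  exact smul_nonneg (inv_nonneg.2 (Real.log_nonneg one_le_two)) (Real.negMulLog_nonneg hx.1 hx.2)

lemma concaveOn_sh : ConcaveOn ℝ (Set.Ici 0) sh := by
  rw [sh_eq_smul_negMulLog]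
  exact Real.concaveOn_negMulLog.smul (inv_nonneg.2 (Real.log_nonneg one_le_two))

variable {ι : Type*} {b c : ι → ℝ} {k : ι} {r : ℝ}

lemma ofReal_sh_add_tsum_le_tsum_of_hasSum_sub (hb : ∀ j, b j ≤ 1) (hc : ∀ j, 0 ≤ c j)
    (hcb : ∀ j, c j ≤ b j) (hbk : ∀ j, b j ≤ b k) (hck : c k = 0)
    (hr : HasSum (fun j ↦ b j - c j) r) (hr1 : r ≤ 1) :
    ENNReal.ofReal (sh r) + ∑' j, ENNReal.ofReal (sh (c j)) ≤
      ∑' j, ENNReal.ofReal (sh (b j)) := by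
  have hb0 (j) : 0 ≤ b j := (hc j).trans (hcb j)
  have hr0 : 0 ≤ r := hr.nonneg fun j ↦ sub_nonneg.2 (hcb j)
  have hsh_b (j) : 0 ≤ sh (b j) := sh_nonneg ⟨hb0 j, hb j⟩
  have hsh_c (j) : 0 ≤ sh (c j) := sh_nonneg ⟨hc j, (hcb j).trans (hb j)⟩
  obtain hk | hk := (hb0 k).eq_or_lt
  · obtain rfl : b = 0 := funext fun j ↦ le_antisymm ((hbk j).trans hk.ge) (hb0 j)
    obtain rfl : c = 0 := funext fun j ↦ le_antisymm (hcb j) (hc j)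
    obtain rfl : r = 0 := hr.unique (by simp)
    simp [sh_zero]
  obtain htop | htop := eq_or_ne (∑' j, ENNReal.ofReal (sh (b j))) ∞
  · exact htop ▸ le_top
  have hb_summable : Summable fun j ↦ sh (b j) := by
    simpa only [ENNReal.toReal_ofReal (hsh_b _)] using ENNReal.summable_toReal htop
  obtain ⟨hc_summable, hle⟩ := summable_and_add_tsum_le_tsum_of_concaveOn concaveOn_sh sh_zero
    hb0 hc hcb hbk (by rwa [interior_Ici]) hck hr0 hr hsh_c hb_summable
  rw [← ENNReal.ofReal_tsum_of_nonneg hsh_b hb_summable,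
    ← ENNReal.ofReal_tsum_of_nonneg hsh_c hc_summable,
    ← ENNReal.ofReal_add (sh_nonneg ⟨hr0, hr1⟩) (tsum_nonneg hsh_c)]
  exact ENNReal.ofReal_le_ofReal hle

end Shannon

section InitialUnion

variable {X : Type*}

/-- The union of the sets of a sequence that precede the `n`-th one, i.e. the set
that `disjointed f` removes from `f n`. -/
def initialUnion (f : ℕ → Set X) (n : ℕ) : Set X := ⋃ j ∈ Finset.range n, f j

lemma initialUnion_zero (f : ℕ → Set X) : initialUnion f 0 = ∅ := by simp [initialUnion]

lemma initialUnion_succ (f : ℕ → Set X) (n : ℕ) :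
    initialUnion f (n + 1) = initialUnion f n ∪ f n := by
  rw [initialUnion, Finset.range_add_one, Finset.set_biUnion_insert, Set.union_comm, initialUnion]

lemma initialUnion_subset_iUnion (f : ℕ → Set X) (n : ℕ) : initialUnion f n ⊆ ⋃ i, f i :=
  Set.iUnion₂_subset fun i _ ↦ Set.subset_iUnion f i

lemma sdiff_initialUnion_eq_disjointed (f : ℕ → Set X) (n : ℕ) :
    f n \ initialUnion f n = disjointed f n := by
  rw [disjointed_apply, Finset.sup_set_eq_biUnion, initialUnion, Nat.Iio_eq_range]

lemma exists_seq_eq_apply_initialUnion (g : Set X → Set X) :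
    ∃ f : ℕ → Set X, ∀ n, f n = g (initialUnion f n) := by
  let U : ℕ → Set X := fun n ↦ (fun V ↦ V ∪ g V)^[n] ∅
  have hU (n) : initialUnion (g ∘ U) n = U n := by
    induction n with
    | zero => exact initialUnion_zero _
    | succ n ih =>
      rw [initialUnion_succ, ih]
      exact (Function.iterate_succ_apply' (fun V ↦ V ∪ g V) n ∅).symm
  exact ⟨g ∘ U, fun n ↦ congrArg g (hU n).symm⟩

end InitialUnion

section Measure

variable {X ι : Type*} [Countable ι] [MeasurableSpace X] {μ : Measure X} [IsFiniteMeasure μ]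
  {P : ι → Set X}

lemma summable_measureReal_of_pairwise_disjoint (hPm : ∀ j, MeasurableSet (P j))
    (hPd : Pairwise (Function.onFun Disjoint P)) : Summable fun j ↦ μ.real (P j) := by
  refine ENNReal.summable_toReal ?_
  rw [← measure_iUnion hPd hPm]
  exact measure_ne_top _ _

lemma hasSum_measureReal_inter (hPm : ∀ j, MeasurableSet (P j))
    (hPd : Pairwise (Function.onFun Disjoint P)) (hP : (⋃ j, P j) =ᵐ[μ] Set.univ)
    {A : Set X} (hA : MeasurableSet A) : HasSum (fun j ↦ μ.real (P j ∩ A)) (μ.real A) := by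
  have hsum : μ A = ∑' j, μ (P j ∩ A) :=
    calc μ A = μ ((⋃ j, P j) ∩ A) := (measure_congr (inter_ae_eq_right_of_ae_eq_univ hP)).symm
      _ = μ (⋃ j, P j ∩ A) := by rw [Set.iUnion_inter]
      _ = ∑' j, μ (P j ∩ A) := measure_iUnion
        (fun i j hij ↦ (hPd hij).mono Set.inter_subset_left Set.inter_subset_left)
        fun j ↦ (hPm j).inter hA
  rw [measureReal_def, hsum, ENNReal.tsum_toReal_eq fun j ↦ measure_ne_top μ _]
  exact ENNReal.hasSum_toReal (hsum ▸ measure_ne_top μ A)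

lemma hasSum_measureReal_sdiff_initialUnion_sub (hPm : ∀ j, MeasurableSet (P j))
    (hPd : Pairwise (Function.onFun Disjoint P)) (hP : (⋃ j, P j) =ᵐ[μ] Set.univ)
    {f : ℕ → Set X} (hfm : ∀ n, MeasurableSet (f n)) (n : ℕ) :
    HasSum (fun j ↦ μ.real (P j \ initialUnion f n) - μ.real (P j \ initialUnion f (n + 1)))
      (μ.real (disjointed f n)) := by
  have hsplit (j) : μ.real (P j \ initialUnion f n) - μ.real (P j \ initialUnion f (n + 1)) =
      μ.real (P j ∩ disjointed f n) := by
    rw [sub_eq_iff_eq_add', ← measureReal_sdiff_add_inter (hfm n), Set.sdiff_sdiff,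
      ← initialUnion_succ, Set.sdiff_inter_right_comm, Set.inter_sdiff_assoc,
      sdiff_initialUnion_eq_disjointed]
  simpa only [hsplit] using hasSum_measureReal_inter hPm hPd hP (.disjointed hfm n)

end Measure

section Greedy

variable {X ι : Type*} [MeasurableSpace X] {μ : Measure X} {P : ι → Set X} {f : ℕ → Set X}

/-- The sequence `f` covers the parts of `P` greedily: `f n` contains a part whose remainder
outside the earlier sets has the largest possible mass. -/
def IsGreedyFor (μ : Measure X) (P : ι → Set X) (f : ℕ → Set X) : Prop :=
  ∀ n, ∃ k, P k ⊆ f n ∧ ∀ j, μ.real (P j \ initialUnion f n) ≤ μ.real (P k \ initialUnion f n)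

lemma exists_isGreedyFor [Countable ι] [Nonempty ι] [IsFiniteMeasure μ] {𝒬 : Set (Set X)}
    (hPm : ∀ j, MeasurableSet (P j)) (hPd : Pairwise (Function.onFun Disjoint P))
    (hPQ : ∀ j, ∃ Q ∈ 𝒬, P j ⊆ Q) : ∃ f : ℕ → Set X, (∀ n, f n ∈ 𝒬) ∧ IsGreedyFor μ P f := by
  have hlargest (U : Set X) : ∃ k, ∀ j, μ.real (P j \ U) ≤ μ.real (P k \ U) :=
    exists_forall_le_of_summable
      ((summable_measureReal_of_pairwise_disjoint hPm hPd).of_nonneg_of_le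
        (fun _ ↦ measureReal_nonneg) fun _ ↦ measureReal_mono Set.sdiff_subset)
      fun _ ↦ measureReal_nonneg
  choose Q hQ hPQ using hPQ
  choose k hk using hlargest
  obtain ⟨f, hf⟩ := exists_seq_eq_apply_initialUnion fun U ↦ Q (k U)
  exact ⟨f, fun n ↦ hf n ▸ hQ _, fun n ↦ ⟨k (initialUnion f n), (hPQ _).trans (hf n).ge, hk _⟩⟩

namespace IsGreedyFor

lemma measureReal_sdiff_initialUnion_le [IsFiniteMeasure μ] (hf : IsGreedyFor μ P f) (j : ι)
    (n : ℕ) : μ.real (P j \ initialUnion f n) ≤ μ.real (disjointed f n) := by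
  obtain ⟨k, hkf, hk⟩ := hf n
  calc μ.real (P j \ initialUnion f n) ≤ μ.real (P k \ initialUnion f n) := hk j
    _ ≤ μ.real (f n \ initialUnion f n) := measureReal_mono (Set.sdiff_subset_sdiff_left hkf)
    _ = μ.real (disjointed f n) := by rw [sdiff_initialUnion_eq_disjointed]

lemma iUnion_ae_eq_univ [Countable ι] [IsFiniteMeasure μ] (hf : IsGreedyFor μ P f)
    (hfm : ∀ n, MeasurableSet (f n)) (hP : (⋃ j, P j) =ᵐ[μ] Set.univ) :
    (⋃ n, f n) =ᵐ[μ] Set.univ := by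
  have htendsto : Tendsto (fun n ↦ μ.real (disjointed f n)) atTop (nhds 0) :=
    (summable_measureReal_of_pairwise_disjoint (.disjointed hfm)
      (disjoint_disjointed f)).tendsto_atTop_zero
  have hdiff (j) : μ (P j \ ⋃ n, f n) = 0 := by
    refine (measureReal_eq_zero_iff).1 (le_antisymm ?_ measureReal_nonneg)
    refine ge_of_tendsto' htendsto fun n ↦ ?_
    calc μ.real (P j \ ⋃ n, f n)
        ≤ μ.real (P j \ initialUnion f n) :=
          measureReal_mono (Set.sdiff_subset_sdiff_right (initialUnion_subset_iUnion f n))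
      _ ≤ μ.real (disjointed f n) := hf.measureReal_sdiff_initialUnion_le j n
  have hsub : (⋃ j, P j) ≤ᵐ[μ] ⋃ n, f n := by
    rw [ae_le_set, Set.iUnion_sdiff]
    exact measure_iUnion_null hdiff
  exact (Set.subset_univ _).eventuallyLE.antisymm (hP.symm.le.trans hsub)

lemma ofReal_sh_disjointed_add_tsum_le_tsum [Countable ι] (hμ : μ Set.univ ≤ 1)
    (hf : IsGreedyFor μ P f) (hPm : ∀ j, MeasurableSet (P j))
    (hPd : Pairwise (Function.onFun Disjoint P)) (hP : (⋃ j, P j) =ᵐ[μ] Set.univ)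
    (hfm : ∀ n, MeasurableSet (f n)) (n : ℕ) :
    ENNReal.ofReal (sh (μ.real (disjointed f n))) +
        ∑' j, ENNReal.ofReal (sh (μ.real (P j \ initialUnion f (n + 1)))) ≤
      ∑' j, ENNReal.ofReal (sh (μ.real (P j \ initialUnion f n))) := by
  have : IsFiniteMeasure μ := ⟨hμ.trans_lt one_lt_top⟩
  have hle_one (A : Set X) : μ.real A ≤ 1 :=
    ENNReal.toReal_mono one_ne_top ((measure_mono A.subset_univ).trans hμ)
  obtain ⟨k, hkf, hk⟩ := hf n
  have hk_empty : P k \ initialUnion f (n + 1) = ∅ := by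
    rw [Set.sdiff_eq_empty, initialUnion_succ]
    exact hkf.trans Set.subset_union_right
  have hmono : initialUnion f n ⊆ initialUnion f (n + 1) := by
    rw [initialUnion_succ]
    exact Set.subset_union_left
  exact ofReal_sh_add_tsum_le_tsum_of_hasSum_sub (fun _ ↦ hle_one _) (fun _ ↦ measureReal_nonneg)
    (fun _ ↦ measureReal_mono (Set.sdiff_subset_sdiff_right hmono)) hk
    (by rw [hk_empty, measureReal_empty])
    (hasSum_measureReal_sdiff_initialUnion_sub hPm hPd hP hfm n) (hle_one _)

lemma tsum_ofReal_sh_disjointed_le [Countable ι] (hμ : μ Set.univ ≤ 1) (hf : IsGreedyFor μ P f)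
    (hPm : ∀ j, MeasurableSet (P j)) (hPd : Pairwise (Function.onFun Disjoint P))
    (hP : (⋃ j, P j) =ᵐ[μ] Set.univ) (hfm : ∀ n, MeasurableSet (f n)) :
    ∑' n, ENNReal.ofReal (sh (μ.real (disjointed f n))) ≤
      ∑' j, ENNReal.ofReal (sh (μ.real (P j))) := by
  have hpartial (n : ℕ) : ∑ i ∈ Finset.range n, ENNReal.ofReal (sh (μ.real (disjointed f i))) +
      ∑' j, ENNReal.ofReal (sh (μ.real (P j \ initialUnion f n))) ≤
        ∑' j, ENNReal.ofReal (sh (μ.real (P j))) := by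
    induction n with
    | zero => simp [initialUnion_zero]
    | succ n ih =>
      rw [Finset.sum_range_succ, add_assoc]
      have hstep := hf.ofReal_sh_disjointed_add_tsum_le_tsum hμ hPm hPd hP hfm n
      exact (add_le_add_right hstep _).trans ih
  exact ENNReal.tsum_le_of_sum_range_le fun n ↦ le_self_add.trans (hpartial n)

end IsGreedyFor

end Greedy

/-- Theorem II.2: for every `𝒬`-acceptable partition `P` there is a sequence `(f i)` of
elements of `𝒬` such that `R i = f i ∖ (f 0 ∪ … ∪ f (i-1))` is a `𝒬`-acceptable
partition consisting of sets of the σ-algebra generated by `𝒬`, with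
`h(μ; R) ≤ h(μ; P)`. -/
theorem stmt_3 {X : Type*} [MeasurableSpace X] (μ : Measure X) (hμ : μ Set.univ ≤ 1)
    (𝒬 : Set (Set X)) (h𝒬 : IsErrorControl 𝒬)
    (P : ℕ → Set X) (hP : IsPartition μ P) (hPQ : Acceptable 𝒬 P) :
    ∃ f : ℕ → Set X, (∀ i, f i ∈ 𝒬) ∧
      IsPartition μ (fun i => f i \ ⋃ j ∈ Finset.range i, f j) ∧
      Acceptable 𝒬 (fun i => f i \ ⋃ j ∈ Finset.range i, f j) ∧
      (∀ i, MeasurableSet[MeasurableSpace.generateFrom 𝒬]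
        (f i \ ⋃ j ∈ Finset.range i, f j)) ∧
      partEntropy μ (fun i => f i \ ⋃ j ∈ Finset.range i, f j) ≤ partEntropy μ P := by
  obtain ⟨hPm, hPd, hPnull⟩ := hP
  have hPcover : (⋃ i, P i) =ᵐ[μ] Set.univ := by rwa [ae_eq_univ, Set.compl_eq_univ_sdiff]
  have : IsFiniteMeasure μ := ⟨hμ.trans_lt one_lt_top⟩
  obtain ⟨f, hf𝒬, hf⟩ := exists_isGreedyFor (μ := μ) hPm hPd hPQ
  have hfm (i) : MeasurableSet (f i) := h𝒬.1 _ (hf𝒬 i)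
  have hR (i) : f i \ ⋃ j ∈ Finset.range i, f j = disjointed f i :=
    sdiff_initialUnion_eq_disjointed f i
  refine ⟨f, hf𝒬, ?_⟩
  simp only [hR]
  refine ⟨⟨.disjointed hfm, disjoint_disjointed f, ?_⟩, ?_, ?_, ?_⟩
  · rw [iUnion_disjointed, ← Set.compl_eq_univ_sdiff, ← ae_eq_univ]
    exact hf.iUnion_ae_eq_univ hfm hPcover
  · exact fun i ↦ ⟨f i, hf𝒬 i, disjointed_subset f i⟩
  · exact .disjointed fun i ↦ MeasurableSpace.measurableSet_generateFrom (hf𝒬 i)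
  · exact hf.tsum_ofReal_sh_disjointed_le hμ hPm hPd hPcover hfm
end

section
/- Let (X, Σ, μ) be a subprobability space and let Q be an error-control family on X such that there exists at least one Q-acceptable partition of X. Then for every ε > 0 there exists a partition P of X with P ≺ Q and every element of P in the sigma algebra generated by Q, such that h(μ; P) ≤ H(μ; Q) + ε. Moreover, P can be chosen of the form { Q_{σ(i)} ∖ ⋃_{k < i} Q_{σ(k)} }_i for some sequence (Q_{σ(i)}) of elements of Q. -/
open MeasureTheory ENNReal Filter

/-!
Enumerate an acceptable partition `P` by decreasing measure, choose `f i ∈ 𝒬` with `P i ⊆ f i`, and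
pass to `Q i = f i \ (f 0 ∪ ⋯ ∪ f (i - 1))`. Since `P 0 ∪ ⋯ ∪ P n ⊆ Q 0 ∪ ⋯ ∪ Q n`, the sequence
`μ (Q i)` majorizes `μ (P i)`, so `∑ min (μ (Q i)) t ≤ ∑ min (μ (P i)) t` for every `t`. Dividing by
`t` and integrating over `(0, 1]` gives `h(μ; Q) ≤ h(μ; P)`, because
`∫ t in (0, 1], min x t / t = -x log x + x` and both families have the same total measure.
-/

section Rearrangement

theorem exists_seq_image_range {α : Type*} [DecidableEq α] {r : Finset α → α → Prop}
    (h : ∀ s, ∃ a, r s a) : ∃ u : ℕ → α, ∀ n, r ((Finset.range n).image u) (u n) := by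
  choose g hg using h
  let T : ℕ → Finset α := fun n => (fun s => insert (g s) s)^[n] ∅
  have image_eq (n : ℕ) : (Finset.range n).image (fun k => g (T k)) = T n := by
    induction n with
    | zero => rfl
    | succ n ih =>
      rw [Finset.range_add_one, Finset.image_insert, ih]
      exact (Function.iterate_succ_apply' (fun s => insert (g s) s) n ∅).symm
  exact ⟨fun n => g (T n), fun n => image_eq n ▸ hg (T n)⟩

variable {ι β : Type*} [LinearOrder β] [OrderBot β] [TopologicalSpace β]
  [OrderClosedTopology β] [Infinite ι] {p : ι → β}

theorem exists_notMem_forall_notMem_le (hp : Tendsto p cofinite (nhds ⊥)) (s : Finset ι) :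
    ∃ m ∉ s, ∀ i ∉ s, p i ≤ p m := by
  by_cases hpos : ∃ j ∉ s, ⊥ < p j
  · obtain ⟨j, hjs, hj⟩ := hpos
    have hfin : {i | ¬ p i < p j}.Finite := eventually_cofinite.1 (hp.eventually_lt_const hj)
    obtain ⟨m, ⟨hjm, hms⟩, hmax⟩ := Set.exists_max_image _ p
      (hfin.sdiff (t := (s : Set ι))) ⟨j, lt_irrefl _, hjs⟩
    refine ⟨m, hms, fun i his => ?_⟩
    by_cases hij : p i < p j
    · exact hij.le.trans (not_lt.1 hjm)
    · exact hmax i ⟨hij, his⟩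
  · push Not at hpos
    obtain ⟨m, hm⟩ := Infinite.exists_notMem_finset s
    exact ⟨m, hm, fun i hi => (hpos i hi).trans bot_le⟩

theorem exists_injective_antitone_comp (hp : Tendsto p cofinite (nhds ⊥)) :
    ∃ σ : ℕ → ι, Function.Injective σ ∧ Antitone (p ∘ σ) ∧ ∀ i ∉ Set.range σ, p i = ⊥ := by
  classical
  obtain ⟨σ, hσ⟩ := exists_seq_image_range (exists_notMem_forall_notMem_le hp)
  have hinj : Function.Injective σ := Function.Injective.of_lt_imp_ne fun m n hmn heq =>
    (hσ n).1 (Finset.mem_image.2 ⟨m, Finset.mem_range.2 hmn, heq⟩)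
  have hmax {n : ℕ} {i : ι} (hi : ∀ k < n, σ k ≠ i) : p i ≤ p (σ n) :=
    (hσ n).2 i (by simpa using hi)
  have htend : Tendsto (p ∘ σ) atTop (nhds ⊥) :=
    hp.comp (Nat.cofinite_eq_atTop ▸ hinj.tendsto_cofinite)
  exact ⟨σ, hinj, fun m n hmn => hmax fun k hkm => hinj.ne (hkm.trans_le hmn).ne,
    fun i hi => le_bot_iff.1 (ge_of_tendsto' htend fun n => hmax fun k _ hk => hi ⟨k, hk⟩)⟩

end Rearrangement

section Majorization

/-- `q` majorizes the nonincreasing sequence `p`: its partial sums dominate those of `p`, while its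
total does not exceed that of `p`. The terms of `q` are not required to be sorted. -/
structure Majorizes (q p : ℕ → ℝ≥0∞) : Prop where
  antitone : Antitone p
  sum_range_le (n : ℕ) : ∑ i ∈ Finset.range n, p i ≤ ∑ i ∈ Finset.range n, q i
  tsum_le : ∑' i, q i ≤ ∑' i, p i

variable {p q : ℕ → ℝ≥0∞}

theorem Majorizes.tsum_eq (h : Majorizes q p) : ∑' i, q i = ∑' i, p i :=
  h.tsum_le.antisymm <|
    ENNReal.tsum_le_of_sum_range_le fun n => (h.sum_range_le n).trans (ENNReal.sum_le_tsum _)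

theorem Majorizes.tsum_nat_add_le (h : Majorizes q p) (hp : ∑' i, p i ≠ ∞) (n : ℕ) :
    ∑' i, q (i + n) ≤ ∑' i, p (i + n) := by
  have hfin : ∑ i ∈ Finset.range n, p i ≠ ∞ := ne_top_of_le_ne_top hp (ENNReal.sum_le_tsum _)
  refine (ENNReal.add_le_add_iff_left hfin).1 ?_
  calc ∑ i ∈ Finset.range n, p i + ∑' i, q (i + n)
      ≤ ∑ i ∈ Finset.range n, q i + ∑' i, q (i + n) :=
      add_le_add (h.sum_range_le n) le_rfl
    _ = ∑' i, q i := ENNReal.summable.sum_add_tsum_nat_add'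
    _ ≤ ∑' i, p i := h.tsum_le
    _ = ∑ i ∈ Finset.range n, p i + ∑' i, p (i + n) :=
      ENNReal.summable.sum_add_tsum_nat_add'.symm

theorem Majorizes.tsum_min_le (h : Majorizes q p) (hp : ∑' i, p i ≠ ∞) (t : ℝ≥0∞) :
    ∑' i, min (q i) t ≤ ∑' i, min (p i) t := by
  by_cases hex : ∃ n, p n ≤ t
  · have hge : ∀ i ∈ Finset.range (Nat.find hex), t = min (p i) t := fun i hi =>
      (min_eq_right (not_le.1 (Nat.find_min hex (Finset.mem_range.1 hi))).le).symm
    have hle (i : ℕ) : p (i + Nat.find hex) = min (p (i + Nat.find hex)) t :=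
      (min_eq_left ((h.antitone (Nat.le_add_left _ i)).trans (Nat.find_spec hex))).symm
    calc ∑' i, min (q i) t
        = ∑ i ∈ Finset.range (Nat.find hex), min (q i) t
            + ∑' i, min (q (i + Nat.find hex)) t :=
          ENNReal.summable.sum_add_tsum_nat_add'.symm
      _ ≤ ∑ _i ∈ Finset.range (Nat.find hex), t + ∑' i, q (i + Nat.find hex) := by
          gcongr <;> simp
      _ ≤ ∑ _i ∈ Finset.range (Nat.find hex), t + ∑' i, p (i + Nat.find hex) :=
          add_le_add le_rfl (h.tsum_nat_add_le hp _)
      _ = ∑ i ∈ Finset.range (Nat.find hex), min (p i) t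
            + ∑' i, min (p (i + Nat.find hex)) t := by
          rw [Finset.sum_congr rfl hge, tsum_congr hle]
      _ = ∑' i, min (p i) t := ENNReal.summable.sum_add_tsum_nat_add'
  · push Not at hex
    exact ENNReal.tsum_le_tsum fun i => le_min ((min_le_right _ _).trans (hex i).le)
      (min_le_right _ _)

theorem lintegral_Ioc_inv_ofReal {a b : ℝ} (ha : 0 < a) (hab : a ≤ b) :
    ∫⁻ t in Set.Ioc a b, (ENNReal.ofReal t)⁻¹ = ENNReal.ofReal (Real.log (b / a)) := by
  have hint : IntegrableOn (fun t : ℝ => t⁻¹) (Set.Ioc a b) :=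
    (intervalIntegrable_iff_integrableOn_Ioc_of_le hab).1
      (intervalIntegral.intervalIntegrable_inv
        (fun t ht => (ha.trans_le (Set.uIcc_of_le hab ▸ ht).1).ne') continuousOn_id)
  have hpos : ∀ t ∈ Set.Ioc a b, 0 < t := fun t ht => ha.trans ht.1
  rw [← integral_inv_of_pos ha (ha.trans_le hab), intervalIntegral.integral_of_le hab,
    ofReal_integral_eq_lintegral_ofReal hint]
  · exact setLIntegral_congr_fun measurableSet_Ioc fun t ht =>
      (ENNReal.ofReal_inv_of_pos (hpos t ht)).symm
  · exact ae_restrict_of_forall_mem measurableSet_Ioc fun t ht => (inv_pos.2 (hpos t ht)).le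

theorem lintegral_min_div_eq_negMulLog_add {x : ℝ≥0∞} (hx : x ≤ 1) :
    ∫⁻ t in Set.Ioc (0 : ℝ) 1, min x (ENNReal.ofReal t) / ENNReal.ofReal t =
      ENNReal.ofReal (Real.negMulLog x.toReal) + x := by
  obtain rfl | hpos := eq_or_ne x 0
  · simp
  lift x to NNReal using ne_top_of_le_ne_top one_ne_top hx
  have hx0 : (0 : ℝ) < x := by simpa [pos_iff_ne_zero] using hpos
  have hx1 : (x : ℝ) ≤ 1 := by simpa using hx
  have hlow : ∫⁻ t in Set.Ioc (0 : ℝ) x, min ↑x (ENNReal.ofReal t) / ENNReal.ofReal t = x := by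
    rw [setLIntegral_congr_fun (g := fun _ => 1) measurableSet_Ioc]
    · simp
    · intro t ht
      have htx : ENNReal.ofReal t ≤ x := by simpa using ENNReal.ofReal_le_ofReal ht.2
      simp only [min_eq_right htx]
      exact ENNReal.div_self (ENNReal.ofReal_pos.2 ht.1).ne' ofReal_ne_top
  have hhigh : ∫⁻ t in Set.Ioc (x : ℝ) 1, min ↑x (ENNReal.ofReal t) / ENNReal.ofReal t =
      ENNReal.ofReal (Real.negMulLog x) := by
    calc ∫⁻ t in Set.Ioc (x : ℝ) 1, min ↑x (ENNReal.ofReal t) / ENNReal.ofReal t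
        = ∫⁻ t in Set.Ioc (x : ℝ) 1, x * (ENNReal.ofReal t)⁻¹ := by
          refine setLIntegral_congr_fun measurableSet_Ioc fun t ht => ?_
          have hxt : x ≤ ENNReal.ofReal t := by simpa using ENNReal.ofReal_le_ofReal ht.1.le
          simp only [min_eq_left hxt, div_eq_mul_inv]
      _ = x * ENNReal.ofReal (Real.log (1 / x)) := by
          rw [lintegral_const_mul _ (by fun_prop), lintegral_Ioc_inv_ofReal hx0 hx1]
      _ = ENNReal.ofReal (Real.negMulLog x) := by
          rw [← ENNReal.ofReal_coe_nnreal, ← ENNReal.ofReal_mul x.coe_nonneg, one_div,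
            Real.log_inv, Real.negMulLog, mul_neg, neg_mul]
  rw [← Set.Ioc_union_Ioc_eq_Ioc hx0.le hx1,
    lintegral_union measurableSet_Ioc (Set.Ioc_disjoint_Ioc_of_le le_rfl), hlow, hhigh,
    ENNReal.coe_toReal, add_comm]

theorem tsum_ofReal_negMulLog_add_tsum (hp : ∀ i, p i ≤ 1) :
    ∑' i, ENNReal.ofReal (Real.negMulLog (p i).toReal) + ∑' i, p i =
      ∫⁻ t in Set.Ioc (0 : ℝ) 1,
        (∑' i, min (p i) (ENNReal.ofReal t)) / ENNReal.ofReal t := by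
  simp only [div_eq_mul_inv, ← ENNReal.tsum_mul_right]
  rw [lintegral_tsum fun i => by fun_prop, ← ENNReal.tsum_add]
  exact tsum_congr fun i => (lintegral_min_div_eq_negMulLog_add (hp i)).symm

theorem Majorizes.tsum_ofReal_negMulLog_le (h : Majorizes q p) (hp : ∑' i, p i ≠ ∞)
    (hp1 : ∀ i, p i ≤ 1) (hq1 : ∀ i, q i ≤ 1) :
    ∑' i, ENNReal.ofReal (Real.negMulLog (q i).toReal) ≤
      ∑' i, ENNReal.ofReal (Real.negMulLog (p i).toReal) := by
  refine (ENNReal.add_le_add_iff_right hp).1 ?_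
  nth_rw 1 [← h.tsum_eq]
  rw [tsum_ofReal_negMulLog_add_tsum hq1, tsum_ofReal_negMulLog_add_tsum hp1]
  exact lintegral_mono fun t => ENNReal.div_le_div_right (h.tsum_min_le hp _) _

end Majorization

section Partition

variable {X : Type*} {𝒬 : Set (Set X)}

theorem sdiff_biUnion_range_eq_disjointed (f : ℕ → Set X) :
    (fun i => f i \ ⋃ j ∈ Finset.range i, f j) = disjointed f := by
  ext i x
  simp [disjointed_eq_inter_compl]

theorem acceptable_disjointed {f : ℕ → Set X} (hf : ∀ i, f i ∈ 𝒬) : Acceptable 𝒬 (disjointed f) :=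
  fun i => ⟨f i, hf i, disjointed_subset f i⟩

variable [MeasurableSpace X] {μ : Measure X} {P f : ℕ → Set X}

theorem partEntropy_eq_tsum_negMulLog_div (μ : Measure X) (P : ℕ → Set X) :
    partEntropy μ P =
      (∑' i, ENNReal.ofReal (Real.negMulLog (μ (P i)).toReal)) / ENNReal.ofReal (Real.log 2) := by
  rw [partEntropy, div_eq_mul_inv, ← ENNReal.tsum_mul_right]
  refine tsum_congr fun i => ?_
  rw [← div_eq_mul_inv, ← ENNReal.ofReal_div_of_pos (Real.log_pos one_lt_two), sh, Real.negMulLog,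
    Real.logb, mul_div_assoc]

theorem IsPartition.tsum_measure_eq (hP : IsPartition μ P) : ∑' i, μ (P i) = μ Set.univ := by
  obtain ⟨hmeas, hdisj, hnull⟩ := hP
  rw [← measure_iUnion hdisj hmeas]
  refine measure_congr (eventuallyEq_univ.2 ?_)
  rwa [mem_ae_iff, Set.compl_eq_univ_sdiff]

theorem IsPartition.comp_injective (hP : IsPartition μ P) {σ : ℕ → ℕ} (hσ : Function.Injective σ)
    (hnull : ∀ i ∉ Set.range σ, μ (P i) = 0) : IsPartition μ (P ∘ σ) := by
  refine ⟨fun i => hP.1 _, fun i j hij => hP.2.1 (hσ.ne hij), ?_⟩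
  have hsub : Set.univ \ ⋃ i, (P ∘ σ) i ⊆
      (Set.univ \ ⋃ i, P i) ∪ ⋃ i : ↥(Set.range σ)ᶜ, P i := by
    intro x hx
    simp only [Set.mem_sdiff, Set.mem_union, Set.mem_iUnion, Set.mem_univ, true_and, not_exists,
      Function.comp_apply] at hx ⊢
    by_contra! hcon
    obtain ⟨⟨i, hi⟩, hout⟩ := hcon
    by_cases hmem : i ∈ Set.range σ
    · obtain ⟨k, rfl⟩ := hmem
      exact hx k hi
    · exact hout ⟨i, hmem⟩ hi
  exact measure_mono_null hsub
    (measure_union_null hP.2.2 (measure_iUnion_null fun i => hnull i i.2))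

theorem IsPartition.disjointed_of_subset (hP : IsPartition μ P) (hf : ∀ i, MeasurableSet (f i))
    (hPf : ∀ i, P i ⊆ f i) : IsPartition μ (disjointed f) := by
  refine ⟨MeasurableSet.disjointed hf, disjoint_disjointed f, ?_⟩
  rw [iUnion_disjointed]
  exact measure_mono_null (Set.sdiff_subset_sdiff_right (Set.iUnion_mono hPf)) hP.2.2

theorem IsPartition.exists_antitone_comp [IsFiniteMeasure μ] (hP : IsPartition μ P) :
    ∃ σ : ℕ → ℕ, Function.Injective σ ∧ Antitone (fun i => μ (P (σ i))) ∧
      IsPartition μ (P ∘ σ) := by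
  have htend : Tendsto (fun i => μ (P i)) cofinite (nhds ⊥) :=
    ENNReal.tendsto_cofinite_zero_of_tsum_ne_top (hP.tsum_measure_eq ▸ measure_ne_top μ _)
  obtain ⟨σ, hσ, hanti, hnull⟩ := exists_injective_antitone_comp htend
  exact ⟨σ, hσ, hanti, hP.comp_injective hσ hnull⟩

theorem sum_range_measure_le_sum_range_disjointed (hPm : ∀ i, MeasurableSet (P i))
    (hPd : Pairwise (Function.onFun Disjoint P)) (hPf : ∀ i, P i ⊆ f i) (n : ℕ) :
    ∑ i ∈ Finset.range n, μ (P i) ≤ ∑ i ∈ Finset.range n, μ (disjointed f i) := by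
  have hunion : ⋃ i ∈ Finset.range n, P i ⊆ ⋃ i ∈ Finset.range n, disjointed f i := by
    cases n with
    | zero => simp
    | succ n =>
      rw [biUnion_range_succ_disjointed, partialSups_eq_biUnion_range]
      exact Set.iUnion₂_mono fun i _ => hPf i
  rw [← measure_biUnion_finset (fun i _ j _ hij => hPd hij) fun i _ => hPm i]
  exact (measure_mono hunion).trans (measure_biUnion_finset_le _ _)

theorem IsPartition.majorizes_disjointed (hP : IsPartition μ P)
    (hanti : Antitone fun i => μ (P i)) (hf : ∀ i, MeasurableSet (f i)) (hPf : ∀ i, P i ⊆ f i) :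
    Majorizes (fun i => μ (disjointed f i)) (fun i => μ (P i)) where
  antitone := hanti
  sum_range_le := sum_range_measure_le_sum_range_disjointed hP.1 hP.2.1 hPf
  tsum_le := by rw [(hP.disjointed_of_subset hf hPf).tsum_measure_eq, hP.tsum_measure_eq]

theorem IsPartition.partEntropy_disjointed_le (hμ : μ Set.univ ≤ 1) (hP : IsPartition μ P)
    (hanti : Antitone fun i => μ (P i)) (hf : ∀ i, MeasurableSet (f i)) (hPf : ∀ i, P i ⊆ f i) :
    partEntropy μ (disjointed f) ≤ partEntropy μ P := by
  have hle_one (s : Set X) : μ s ≤ 1 := (measure_mono (Set.subset_univ s)).trans hμ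
  have hfin : ∑' i, μ (P i) ≠ ∞ :=
    hP.tsum_measure_eq ▸ ne_top_of_le_ne_top one_ne_top hμ
  rw [partEntropy_eq_tsum_negMulLog_div, partEntropy_eq_tsum_negMulLog_div]
  exact ENNReal.div_le_div_right ((hP.majorizes_disjointed hanti hf hPf).tsum_ofReal_negMulLog_le
    hfin (fun i => hle_one _) fun i => hle_one _) _

theorem exists_partEntropy_disjointed_le (hμ : μ Set.univ ≤ 1) (h𝒬 : ∀ Q ∈ 𝒬, MeasurableSet Q)
    (hP : IsPartition μ P) (hP𝒬 : Acceptable 𝒬 P) :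
    ∃ f : ℕ → Set X, (∀ i, f i ∈ 𝒬) ∧ IsPartition μ (disjointed f) ∧
      partEntropy μ (disjointed f) ≤ partEntropy μ P := by
  have : IsFiniteMeasure μ := ⟨hμ.trans_lt one_lt_top⟩
  choose F hF𝒬 hPF using hP𝒬
  obtain ⟨σ, hσ, hanti, hPσ⟩ := hP.exists_antitone_comp
  have hF (i : ℕ) : MeasurableSet (F (σ i)) := h𝒬 _ (hF𝒬 _)
  have hPFσ (i : ℕ) : P (σ i) ⊆ F (σ i) := hPF _
  refine ⟨F ∘ σ, fun i => hF𝒬 _, hPσ.disjointed_of_subset hF hPFσ, ?_⟩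
  calc partEntropy μ (disjointed (F ∘ σ))
      ≤ partEntropy μ (P ∘ σ) := hPσ.partEntropy_disjointed_le hμ hanti hF hPFσ
    _ ≤ partEntropy μ P := ENNReal.tsum_comp_le_tsum_of_injective hσ
        fun i => ENNReal.ofReal (sh (μ (P i)).toReal)

theorem exists_partEntropy_le_coverEntropy_add
    (hex : ∃ P : ℕ → Set X, IsPartition μ P ∧ Acceptable 𝒬 P) {δ : ℝ≥0∞} (hδ : δ ≠ 0) :
    ∃ P : ℕ → Set X, IsPartition μ P ∧ Acceptable 𝒬 P ∧
      partEntropy μ P ≤ coverEntropy μ 𝒬 + δ := by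
  obtain htop | hfin := eq_or_ne (coverEntropy μ 𝒬) ∞
  · obtain ⟨P, hP, hP𝒬⟩ := hex
    exact ⟨P, hP, hP𝒬, by simp [htop]⟩
  · have hlt := ENNReal.lt_add_right hfin hδ
    nth_rw 1 [coverEntropy] at hlt
    simp only [iInf_lt_iff] at hlt
    obtain ⟨P, hP, hP𝒬, hPlt⟩ := hlt
    exact ⟨P, hP, hP𝒬, hPlt.le⟩

end Partition

/-- Corollary III.2: if some `𝒬`-acceptable partition exists, then for every `ε > 0`
there is a `𝒬`-acceptable partition `P ⊆ Σ_𝒬` with `h(μ; P) ≤ H(μ; 𝒬) + ε`; moreover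
`P` can be chosen of the form `{ f i ∖ (f 0 ∪ … ∪ f (i-1)) }_i` with `f i ∈ 𝒬`. -/
theorem stmt_5 {X : Type*} [MeasurableSpace X] (μ : Measure X) (hμ : μ Set.univ ≤ 1)
    (𝒬 : Set (Set X)) (h𝒬 : IsErrorControl 𝒬)
    (hex : ∃ P : ℕ → Set X, IsPartition μ P ∧ Acceptable 𝒬 P)
    (ε : ℝ) (hε : 0 < ε) :
    ∃ f : ℕ → Set X, (∀ i, f i ∈ 𝒬) ∧
      IsPartition μ (fun i => f i \ ⋃ j ∈ Finset.range i, f j) ∧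
      Acceptable 𝒬 (fun i => f i \ ⋃ j ∈ Finset.range i, f j) ∧
      (∀ i, MeasurableSet[MeasurableSpace.generateFrom 𝒬]
        (f i \ ⋃ j ∈ Finset.range i, f j)) ∧
      partEntropy μ (fun i => f i \ ⋃ j ∈ Finset.range i, f j) ≤
        coverEntropy μ 𝒬 + ENNReal.ofReal ε := by
  obtain ⟨P, hP, hP𝒬, hPε⟩ :=
    exists_partEntropy_le_coverEntropy_add hex (ENNReal.ofReal_pos.2 hε).ne'
  obtain ⟨f, hf𝒬, hf, hfP⟩ := exists_partEntropy_disjointed_le hμ h𝒬.1 hP hP𝒬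
  have hgen (i : ℕ) : MeasurableSet[MeasurableSpace.generateFrom 𝒬] (disjointed f i) :=
    MeasurableSet.disjointed
      (fun j => MeasurableSpace.measurableSet_generateFrom (hf𝒬 j)) i
  rw [← sdiff_biUnion_range_eq_disjointed] at hf hfP
  refine ⟨f, hf𝒬, hf, ?_, fun i => ?_, hfP.trans hPε⟩
  · exact sdiff_biUnion_range_eq_disjointed f ▸ acceptable_disjointed hf𝒬
  · exact congrFun (sdiff_biUnion_range_eq_disjointed f) i ▸ hgen i
end

section
/- Let (X, Σ, μ) be a subprobability space, let P = {P_i}_{i=1}^{∞} be a partition of X with h(μ; P) < ∞, and let (R_i)_{i=1}^{∞} be a sequence of pairwise disjoint measurable sets such that {R_i}_{i=1}^{∞} is a partition of X. Then lim_{n→∞} Σ_{i=1}^{∞} sh(μ(P_i ∖ (R_1 ∪ … ∪ R_n))) = 0, and consequently for every k ∈ ℕ: Σ_{i=1}^{k} sh(μ(R_i)) + Σ_{i=1}^{∞} sh(μ(P_i ∖ (R_1 ∪ … ∪ R_k))) ≥ Σ_{i=1}^{∞} sh(μ(R_i)) whenever the left-hand side is, for every n ≥ k, at least Σ_{i=1}^{n}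 sh(μ(R_i)) + Σ_{i=1}^{∞} sh(μ(P_i ∖ (R_1 ∪ … ∪ R_n))). -/
open MeasureTheory ENNReal Filter

/-!
If `0 ≤ y ≤ x`, writing `y = x * (y / x)` and using `-t * log t ≤ 1 - t` for `t = y / x` bounds
`sh y` by the positive part of `sh x` plus `x / log 2`. Hence the entropy terms of the remainders
`P i \ (R 0 ∪ … ∪ R (n - 1))` are dominated, uniformly in `n`, by a family which is summable as soon
as both the entropy and the total mass of `P` are finite. Each remainder has measure tending to `0`
by continuity from above, and dominated convergence for the counting measure gives the limit.
-/

lemma sh_eq_negMulLog_div_log_two (x : ℝ) : sh x = Real.negMulLog x / Real.log 2 := by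
  simp only [sh, Real.logb, Real.negMulLog, mul_div_assoc]

lemma continuous_sh : Continuous sh := by
  simpa only [← sh_eq_negMulLog_div_log_two] using Real.continuous_negMulLog.div_const (Real.log 2)

lemma negMulLog_le_max_add {x y : ℝ} (hy : 0 ≤ y) (hyx : y ≤ x) :
    Real.negMulLog y ≤ max (Real.negMulLog x) 0 + x := by
  have hx : 0 ≤ x := hy.trans hyx
  set t := y / x
  have ht₀ : 0 ≤ t := div_nonneg hy hx
  have ht₁ : t ≤ 1 := div_le_one_of_le₀ hyx hx
  have hxt : x * t = y := mul_div_cancel_of_imp' fun h => le_antisymm (hyx.trans h.le) hy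
  calc Real.negMulLog y = t * Real.negMulLog x + x * Real.negMulLog t := by
        rw [← hxt, Real.negMulLog_mul]
    _ ≤ t * max (Real.negMulLog x) 0 + x * (1 - t) := by
        gcongr
        exacts [le_max_left _ _, Real.negMulLog_le_one_sub_self ht₀]
    _ ≤ max (Real.negMulLog x) 0 + x :=
        add_le_add (mul_le_of_le_one_left (le_max_right _ _) ht₁)
          (mul_le_of_le_one_right hx (sub_le_self 1 ht₀))

lemma sh_le_max_add {x y : ℝ} (hy : 0 ≤ y) (hyx : y ≤ x) :
    sh y ≤ max (sh x) 0 + x / Real.log 2 := by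
  have hlog : 0 < Real.log 2 := Real.log_pos one_lt_two
  have h := div_le_div_of_nonneg_right (negMulLog_le_max_add hy hyx) hlog.le
  rwa [add_div, ← max_div_div_right hlog.le, zero_div, ← sh_eq_negMulLog_div_log_two,
    ← sh_eq_negMulLog_div_log_two] at h

lemma ofReal_sh_toReal_le_add {a b : ℝ≥0∞} (hab : a ≤ b) :
    ENNReal.ofReal (sh a.toReal) ≤
      ENNReal.ofReal (sh b.toReal) + b / ENNReal.ofReal (Real.log 2) := by
  obtain rfl | hb := eq_or_ne b ⊤
  · simp [ENNReal.top_div]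
  have hlog : 0 < Real.log 2 := Real.log_pos one_lt_two
  calc ENNReal.ofReal (sh a.toReal)
      ≤ ENNReal.ofReal (max (sh b.toReal) 0 + b.toReal / Real.log 2) :=
        ENNReal.ofReal_le_ofReal (sh_le_max_add toReal_nonneg (toReal_mono hb hab))
    _ ≤ ENNReal.ofReal (max (sh b.toReal) 0) + ENNReal.ofReal (b.toReal / Real.log 2) :=
        ENNReal.ofReal_add_le
    _ = ENNReal.ofReal (sh b.toReal) + b / ENNReal.ofReal (Real.log 2) := by
        rw [ENNReal.ofReal_max, ENNReal.ofReal_zero, max_eq_left zero_le,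
          ENNReal.ofReal_div_of_pos hlog, ENNReal.ofReal_toReal hb]

lemma tendsto_ofReal_sh_toReal_zero {α : Type*} {l : Filter α} {a : α → ℝ≥0∞}
    (ha : Tendsto a l (nhds 0)) :
    Tendsto (fun x => ENNReal.ofReal (sh (a x).toReal)) l (nhds 0) := by
  have h := ENNReal.tendsto_ofReal
    ((continuous_sh.tendsto _).comp ((ENNReal.tendsto_toReal ENNReal.zero_ne_top).comp ha))
  simpa [sh, Function.comp_def] using h

lemma ennreal_tendsto_tsum_of_dominated_convergence {α ι : Type*} {l : Filter α}
    [l.IsCountablyGenerated] {f : α → ι → ℝ≥0∞} {g bound : ι → ℝ≥0∞}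
    (h_bound : ∀ᶠ x in l, ∀ i, f x i ≤ bound i) (h_fin : ∑' i, bound i ≠ ⊤)
    (h_lim : ∀ i, Tendsto (fun x => f x i) l (nhds (g i))) :
    Tendsto (fun x => ∑' i, f x i) l (nhds (∑' i, g i)) := by
  let _ : MeasurableSpace ι := ⊤
  simp only [← lintegral_count] at h_fin ⊢
  exact tendsto_lintegral_filter_of_dominated_convergence bound
    (.of_forall fun _ => measurable_from_top) (h_bound.mono fun _ h => .of_forall h) h_fin
    (.of_forall h_lim)

lemma tendsto_tsum_ofReal_sh_zero {α ι : Type*} {l : Filter α} [l.IsCountablyGenerated]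
    {a : α → ι → ℝ≥0∞} {b : ι → ℝ≥0∞} (hab : ∀ᶠ x in l, ∀ i, a x i ≤ b i)
    (hb : ∑' i, b i ≠ ⊤) (hsh : ∑' i, ENNReal.ofReal (sh (b i).toReal) ≠ ⊤)
    (ha : ∀ i, Tendsto (fun x => a x i) l (nhds 0)) :
    Tendsto (fun x => ∑' i, ENNReal.ofReal (sh (a x i).toReal)) l (nhds 0) := by
  have hlog : ENNReal.ofReal (Real.log 2) ≠ 0 := by
    simpa using Real.log_pos one_lt_two
  have h_fin :
      ∑' i, (ENNReal.ofReal (sh (b i).toReal) + b i / ENNReal.ofReal (Real.log 2)) ≠ ⊤ := by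
    simp only [div_eq_mul_inv, ENNReal.tsum_add, ENNReal.tsum_mul_right]
    exact ENNReal.add_ne_top.2 ⟨hsh, ENNReal.mul_ne_top hb (ENNReal.inv_ne_top.2 hlog)⟩
  simpa only [tsum_zero] using ennreal_tendsto_tsum_of_dominated_convergence
    (hab.mono fun _ h i => ofReal_sh_toReal_le_add (h i)) h_fin
    fun i => tendsto_ofReal_sh_toReal_zero (ha i)

lemma ennreal_tsum_le_of_sum_range_add_le {f c : ℕ → ℝ≥0∞} {b : ℝ≥0∞} {k : ℕ}
    (h : ∀ n, k ≤ n → ∑ i ∈ Finset.range n, f i + c n ≤ b) : ∑' i, f i ≤ b :=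
  le_of_tendsto (ENNReal.tendsto_nat_tsum f) <|
    (eventually_ge_atTop k).mono fun n hn => le_self_add.trans (h n hn)

section Exhaustion

variable {X : Type*} [MeasurableSpace X] {μ : Measure X}

lemma tendsto_measure_sdiff_zero_of_monotone {κ : Type*} [Preorder κ] [Countable κ]
    {s : Set X} {t : κ → Set X} (hs : μ s ≠ ⊤) (ht : ∀ n, NullMeasurableSet (t n) μ)
    (ht_mono : Monotone t) (hst : μ (s \ ⋃ n, t n) = 0) :
    Tendsto (fun n => μ (s \ t n)) atTop (nhds 0) := by
  refine .of_neBot_imp fun h_neBot => ?_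
  obtain ⟨n₀⟩ := (atTop_neBot_iff.1 h_neBot).1
  -- Restricting `μ` to `s` avoids assuming that `s` is measurable.
  have ht_compl (n : κ) : NullMeasurableSet (t n)ᶜ (μ.restrict s) :=
    (ht n).compl.mono_ac Measure.restrict_le_self.absolutelyContinuous
  have h_restrict (n : κ) : μ.restrict s (t n)ᶜ = μ (s \ t n) := by
    rw [Measure.restrict_apply₀ (ht_compl n), Set.inter_comm, Set.sdiff_eq]
  have h_null : NullMeasurableSet (⋃ n, t n)ᶜ (μ.restrict s) := by
    simpa only [Set.compl_iUnion] using NullMeasurableSet.iInter ht_compl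
  have h_inter : μ.restrict s (⋂ n, (t n)ᶜ) = 0 := by
    rw [← Set.compl_iUnion, Measure.restrict_apply₀ h_null, Set.inter_comm, ← Set.sdiff_eq, hst]
  have h_lim := tendsto_measure_iInter_atTop ht_compl
    (fun _ _ hmn => Set.compl_subset_compl.2 (ht_mono hmn))
    ⟨n₀, by rw [h_restrict]; exact measure_ne_top_of_subset Set.sdiff_subset hs⟩
  simpa only [h_inter, Function.comp_def, h_restrict] using h_lim

lemma tendsto_tsum_ofReal_sh_measure_sdiff_zero {ι κ : Type*} [Preorder κ] [Countable κ]
    {P : ι → Set X} {t : κ → Set X} (hP : ∑' i, μ (P i) ≠ ⊤)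
    (hsh : ∑' i, ENNReal.ofReal (sh (μ (P i)).toReal) ≠ ⊤)
    (ht : ∀ n, NullMeasurableSet (t n) μ) (ht_mono : Monotone t)
    (hPt : ∀ i, μ (P i \ ⋃ n, t n) = 0) :
    Tendsto (fun n => ∑' i, ENNReal.ofReal (sh (μ (P i \ t n)).toReal)) atTop (nhds 0) :=
  tendsto_tsum_ofReal_sh_zero (.of_forall fun _ _ => measure_mono Set.sdiff_subset) hP hsh fun i =>
    tendsto_measure_sdiff_zero_of_monotone (ENNReal.ne_top_of_tsum_ne_top hP i) ht ht_mono (hPt i)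

end Exhaustion

namespace IsPartition

variable {X : Type*} [MeasurableSpace X] {μ : Measure X} {P : ℕ → Set X}

lemma tsum_measure_ne_top [IsFiniteMeasure μ] (hP : IsPartition μ P) : ∑' i, μ (P i) ≠ ⊤ :=
  ((tsum_meas_le_meas_iUnion_of_disjoint μ hP.1 hP.2.1).trans_lt (measure_lt_top μ _)).ne

lemma measure_sdiff_iUnion (hP : IsPartition μ P) (s : Set X) : μ (s \ ⋃ i, P i) = 0 :=
  measure_mono_null (Set.sdiff_subset_sdiff_left s.subset_univ) hP.2.2

end IsPartition

/-- Since `ENNReal.ofReal` truncates `sh` to `0` above `1`, the value `0` produced by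
`ENNReal.toReal` when `μ (R i) = ⊤` is the limit of the truncated function at infinity. -/
theorem stmt_11_general {X ι : Type*} [MeasurableSpace X] (μ : Measure X) (P : ι → Set X)
    (hP : ∑' i, μ (P i) ≠ ⊤) (hfin : ∑' i, ENNReal.ofReal (sh ((μ (P i)).toReal)) ≠ ⊤)
    (R : ℕ → Set X) (hR : ∀ j, NullMeasurableSet (R j) μ)
    (hPR : ∀ i, μ (P i \ ⋃ j, R j) = 0) :
    Filter.Tendsto
        (fun n => ∑' i, ENNReal.ofReal
          (sh ((μ (P i \ ⋃ j ∈ Finset.range n, R j)).toReal)))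
        Filter.atTop (nhds 0) ∧
      ∀ k : ℕ,
        (∀ n, k ≤ n →
          ∑ i ∈ Finset.range n, ENNReal.ofReal (sh ((μ (R i)).toReal)) +
              ∑' i, ENNReal.ofReal
                (sh ((μ (P i \ ⋃ j ∈ Finset.range n, R j)).toReal)) ≤
            ∑ i ∈ Finset.range k, ENNReal.ofReal (sh ((μ (R i)).toReal)) +
              ∑' i, ENNReal.ofReal
                (sh ((μ (P i \ ⋃ j ∈ Finset.range k, R j)).toReal))) →
        ∑' i, ENNReal.ofReal (sh ((μ (R i)).toReal)) ≤
          ∑ i ∈ Finset.range k, ENNReal.ofReal (sh ((μ (R i)).toReal)) +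
            ∑' i, ENNReal.ofReal
              (sh ((μ (P i \ ⋃ j ∈ Finset.range k, R j)).toReal)) := by
  refine ⟨?_, fun k => ennreal_tsum_le_of_sum_range_add_le⟩
  have h_union : ⋃ n, ⋃ j ∈ Finset.range n, R j = ⋃ j, R j := by
    simpa only [Finset.mem_range] using Set.biUnion_lt_eq_iUnion (s := R)
  refine tendsto_tsum_ofReal_sh_measure_sdiff_zero hP hfin
    (fun n => Finset.nullMeasurableSet_biUnion _ fun j _ => hR j)
    (fun m n hmn => Set.biUnion_subset_biUnion_left (Finset.range_mono hmn)) ?_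
  simpa only [h_union] using hPR

/-- Steps of Theorem II.2: if `P` has finite entropy and `R` is a (pairwise disjoint)
partition of `X`, then `lim_n Σ_i sh(μ(P i ∖ (R 0 ∪ … ∪ R (n-1)))) = 0`; consequently,
for every `k`, `Σ_{i<k} sh(μ(R i)) + Σ_i sh(μ(P i ∖ (R 0 ∪ … ∪ R (k-1)))) ≥ Σ_i sh(μ(R i))`
whenever this left-hand side dominates, for every `n ≥ k`, the analogous expression at `n`. -/
theorem stmt_11 {X : Type*} [MeasurableSpace X] (μ : Measure X) (hμ : μ Set.univ ≤ 1)
    (P : ℕ → Set X) (hP : IsPartition μ P) (hfin : partEntropy μ P ≠ ⊤)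
    (R : ℕ → Set X) (hR : IsPartition μ R) :
    Filter.Tendsto
        (fun n => ∑' i, ENNReal.ofReal
          (sh ((μ (P i \ ⋃ j ∈ Finset.range n, R j)).toReal)))
        Filter.atTop (nhds 0) ∧
      ∀ k : ℕ,
        (∀ n, k ≤ n →
          ∑ i ∈ Finset.range n, ENNReal.ofReal (sh ((μ (R i)).toReal)) +
              ∑' i, ENNReal.ofReal
                (sh ((μ (P i \ ⋃ j ∈ Finset.range n, R j)).toReal)) ≤
            ∑ i ∈ Finset.range k, ENNReal.ofReal (sh ((μ (R i)).toReal)) +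
              ∑' i, ENNReal.ofReal
                (sh ((μ (P i \ ⋃ j ∈ Finset.range k, R j)).toReal))) →
        ∑' i, ENNReal.ofReal (sh ((μ (R i)).toReal)) ≤
          ∑ i ∈ Finset.range k, ENNReal.ofReal (sh ((μ (R i)).toReal)) +
            ∑' i, ENNReal.ofReal
              (sh ((μ (P i \ ⋃ j ∈ Finset.range k, R j)).toReal)) := by
  have : IsFiniteMeasure μ := ⟨hμ.trans_lt ENNReal.one_lt_top⟩
  exact stmt_11_general μ P hP.tsum_measure_ne_top hfin R (fun j => (hR.1 j).nullMeasurableSet)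
    fun i => hR.measure_sdiff_iUnion (P i)
end
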